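/- Let n ≥ 2, L ≥ 1, and let K_{i,j}^{(ℓ)} ∈ {0,1} be given for all 1 ≤ i ≤ j ≤ n−1 and ℓ ∈ {1, …, L}. Define the strictly upper-triangular matrix B ∈ {0,1}^{n×n} by B_{i,j+1} = ⊕_{ℓ=1}^{L} K_{i,j}^{(ℓ)} for 1 ≤ i ≤ j ≤ n−1 and all other entries 0. Define the layered directed graph C with consecutive layers N_1, J_1, N_2, J_2, …, J_{n−1}, N_n, where each layer N_i has vertex set {1, …, n} and each layer J_i has vertex set {1, …, n} ∪ {(i,j,ℓ) : i ≤ j ≤ n−1, ℓ ∈ {1,…,L}}, and whose only edges are: (a) from vertex q in N_i to vertex q in J_i, for every q ∈ {1,…,n} and every i; (b) from vertex i in N_i to vertex (i,j,ℓ) in J_i if and only if K_{i,j}^{(ℓ)} = 1; (c) from vertex q in J_i to vertex q in N_{i+1}, for every q ∈ {1,…,n} and every i; and (d) from vertex (i,j,ℓ) in J_i to vertex j+1 in N_{i+1}, always. Then the number of directed paths in C from vertex 1 in layer N_1 to vertex n in layer N_n is congruent modulo 2 to the number of directed paths from vertex 1 to vertex n in the monotone DAG B. -/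

import Mathlib

/-!
Proposition 4.12 ('prop:C') of the paper.  All indices are 0-based: vertex `p : Fin n`
corresponds to the paper's vertex `p+1`, the bit `K i j ℓ` (for `0 ≤ i ≤ j ≤ n-2`,
`ℓ < L`) corresponds to the paper's `K_{i+1,j+1}^{(ℓ+1)}`, and the paper's matrix entry
`B_{i,j+1} = ⊕_ℓ K_{i,j}^{(ℓ)}` becomes `B p q = (∑_ℓ K p (q-1) ℓ) % 2` for `p < q`.

The layered graph `C` has `2n-1` layers `N_1, J_1, N_2, …, J_{n-1}, N_n`, indexed by
`t : Fin (2n-1)` (even `t = 2i` is layer `N_{i+1}`, odd `t = 2i+1` is layer `J_{i+1}`).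
Layer-`t` vertices are encoded as `(t, Sum.inl q)` for the vertices `{1, …, n}` and
`(t, Sum.inr (j, ℓ))` for the junction vertices `(i, j, ℓ)` of a `J`-layer (junction
vertices of a `J_i` layer all have first coordinate `i`, so only `(j, ℓ)` is recorded;
unused sum components are isolated, hence do not affect path counts).  Edges (a)–(d)
go only from each layer to the next, so the number of directed paths between two
vertices is `∑_{k≥1} (M^k)` of the adjacency matrix `M`; all such paths have length at
most `2n-2`.
-/

/-- The monotone-DAG adjacency matrix `B` determined by the bits `K`. -/
def monB (n L : ℕ) (K : ℕ → ℕ → ℕ → Bool) : Matrix (Fin n) (Fin n) ℕ :=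
  Matrix.of fun p q : Fin n =>
    if p < q then
      (∑ ℓ ∈ Finset.range L, if K (p : ℕ) ((q : ℕ) - 1) ℓ then 1 else 0) % 2
    else 0

/-- Adjacency matrix of the layered graph `C`: edges (a) `q ∈ N_i → q ∈ J_i` always,
(b) `i ∈ N_i → (i,j,ℓ) ∈ J_i` iff `K i j ℓ = 1` (with `i ≤ j ≤ n-2`, 0-indexed),
(c) `q ∈ J_i → q ∈ N_{i+1}` always, (d) `(i,j,ℓ) ∈ J_i → j+1 ∈ N_{i+1}` always. -/
def layerAdj (n L : ℕ) (K : ℕ → ℕ → ℕ → Bool) :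
    Matrix (Fin (2 * n - 1) × (Fin n ⊕ Fin n × Fin L))
      (Fin (2 * n - 1) × (Fin n ⊕ Fin n × Fin L)) ℕ :=
  Matrix.of fun p q =>
    if (q.1 : ℕ) = (p.1 : ℕ) + 1 then
      if (p.1 : ℕ) % 2 = 0 then
        -- `N`-layer (layer index `(p.1 : ℕ)/2`) to `J`-layer
        match p.2, q.2 with
        | Sum.inl a, Sum.inl b => if a = b then 1 else 0
        | Sum.inl a, Sum.inr (j, ℓ) =>
            if (a : ℕ) = (p.1 : ℕ) / 2 ∧ (a : ℕ) ≤ (j : ℕ) ∧ (j : ℕ) ≤ n - 2 ∧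
                K (a : ℕ) (j : ℕ) (ℓ : ℕ) then 1 else 0
        | _, _ => 0
      else
        -- `J`-layer to `N`-layer
        match p.2, q.2 with
        | Sum.inl a, Sum.inl b => if a = b then 1 else 0
        | Sum.inr (j, _), Sum.inl b => if (b : ℕ) = (j : ℕ) + 1 then 1 else 0
        | _, _ => 0
    else 0


lemma layerAdj_pow_zero (n L : ℕ) (K : ℕ → ℕ → ℕ → Bool) (k : ℕ)
    (p q : Fin (2 * n - 1) × (Fin n ⊕ Fin n × Fin L))
    (h : (q.1 : ℕ) ≠ (p.1 : ℕ) + k) : ((layerAdj n L K) ^ k) p q = 0 := by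
  induction k generalizing p with
  | zero =>
    rw [pow_zero, Matrix.one_apply_ne]
    rintro rfl
    simp at h
  | succ k ih =>
    rw [pow_succ', Matrix.mul_apply]
    apply Finset.sum_eq_zero
    intro r _
    by_cases hr : (r.1 : ℕ) = (p.1 : ℕ) + 1
    · rw [ih r (by omega), mul_zero]
    · have : layerAdj n L K p r = 0 := by
        simp only [layerAdj, Matrix.of_apply, if_neg hr]
      rw [this, zero_mul]

lemma monB_pow_zero (n L : ℕ) (K : ℕ → ℕ → ℕ → Bool) (k : ℕ) (p q : Fin n)
    (h : (q : ℕ) < (p : ℕ) + k) : ((monB n L K) ^ k) p q = 0 := by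
  induction k generalizing p with
  | zero =>
    rw [pow_zero, Matrix.one_apply_ne]
    rintro rfl
    simp at h
  | succ k ih =>
    rw [pow_succ', Matrix.mul_apply]
    apply Finset.sum_eq_zero
    intro r _
    by_cases hr : p < r
    · have : (p : ℕ) < r := hr
      rw [ih r (by omega), mul_zero]
    · have : monB n L K p r = 0 := by
        simp only [monB, Matrix.of_apply, if_neg hr]
      rw [this, zero_mul]

lemma layer_sum (n L : ℕ) (K : ℕ → ℕ → ℕ → Bool)
    (p : Fin (2 * n - 1) × (Fin n ⊕ Fin n × Fin L)) (t : Fin (2 * n - 1))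
    (ht : (t : ℕ) = (p.1 : ℕ) + 1)
    (f : Fin (2 * n - 1) × (Fin n ⊕ Fin n × Fin L) → ℕ) :
    ∑ r, layerAdj n L K p r * f r = ∑ x, layerAdj n L K p (t, x) * f (t, x) := by
  rw [Fintype.sum_prod_type]
  apply Finset.sum_eq_single t
  · intro s _ hs
    apply Finset.sum_eq_zero
    intro x _
    have : layerAdj n L K p (s, x) = 0 := by
      have : (s : ℕ) ≠ (p.1 : ℕ) + 1 := by
        intro h
        exact hs (Fin.ext (by omega))
      simp only [layerAdj, Matrix.of_apply, if_neg this]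
    rw [this, zero_mul]
  · simp

lemma stepN (n L : ℕ) (K : ℕ → ℕ → ℕ → Bool) (s t : Fin (2 * n - 1)) (i : ℕ)
    (hs : (s : ℕ) = 2 * i) (ht : (t : ℕ) = 2 * i + 1) (a : Fin n)
    (f : Fin (2 * n - 1) × (Fin n ⊕ Fin n × Fin L) → ℕ) :
    ∑ r, layerAdj n L K (s, Sum.inl a) r * f r = f (t, Sum.inl a) +
      ∑ j : Fin n, ∑ l : Fin L, (if (a : ℕ) = i ∧ (a : ℕ) ≤ (j : ℕ) ∧ (j : ℕ) ≤ n - 2 ∧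
                K (a : ℕ) (j : ℕ) (l : ℕ) then 1 else 0) * f (t, Sum.inr (j, l)) := by
  rw [layer_sum n L K _ t (by simp [hs, ht]), Fintype.sum_sum_type, Fintype.sum_prod_type]
  simp [layerAdj, hs, ht]

lemma stepJ1 (n L : ℕ) (K : ℕ → ℕ → ℕ → Bool) (s t : Fin (2 * n - 1)) (i : ℕ)
    (hs : (s : ℕ) = 2 * i + 1) (ht : (t : ℕ) = 2 * i + 2) (a : Fin n)
    (f : Fin (2 * n - 1) × (Fin n ⊕ Fin n × Fin L) → ℕ) :
    ∑ r, layerAdj n L K (s, Sum.inl a) r * f r = f (t, Sum.inl a) := by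
  rw [layer_sum n L K _ t (by simp [hs, ht]), Fintype.sum_sum_type, Fintype.sum_prod_type]
  simp [layerAdj, hs, ht]

lemma stepJ2 (n L : ℕ) (K : ℕ → ℕ → ℕ → Bool) (s t : Fin (2 * n - 1)) (i : ℕ)
    (hs : (s : ℕ) = 2 * i + 1) (ht : (t : ℕ) = 2 * i + 2) (j : Fin n) (l : Fin L)
    (f : Fin (2 * n - 1) × (Fin n ⊕ Fin n × Fin L) → ℕ) :
    ∑ r, layerAdj n L K (s, Sum.inr (j, l)) r * f r =
      ∑ b : Fin n, if (b : ℕ) = (j : ℕ) + 1 then f (t, Sum.inl b) else 0 := by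
  rw [layer_sum n L K _ t (by simp [hs, ht]), Fintype.sum_sum_type, Fintype.sum_prod_type]
  simp [layerAdj, hs, ht]

/-- Number of paths to `z` in the monotone DAG. -/
def gPaths (n L : ℕ) (K : ℕ → ℕ → ℕ → Bool) (z a : Fin n) : ℕ :=
  ∑ k ∈ Finset.range n, ((monB n L K) ^ k) a z

lemma gPaths_rec (n L : ℕ) (K : ℕ → ℕ → ℕ → Bool) (z a : Fin n) (h : a ≠ z) :
    gPaths n L K z a = ∑ b, monB n L K a b * gPaths n L K z b := by
  have h1 : gPaths n L K z a = ∑ k ∈ Finset.range (n + 1), ((monB n L K) ^ k) a z := by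
    rw [Finset.sum_range_succ, monB_pow_zero n L K n a z (by omega), add_zero, gPaths]
  rw [h1, Finset.sum_range_succ', pow_zero, Matrix.one_apply_ne h, add_zero]
  simp only [gPaths, Finset.mul_sum, pow_succ', Matrix.mul_apply]
  rw [Finset.sum_comm]

/-- two-layer step -/
lemma step2 (n L : ℕ) (K : ℕ → ℕ → ℕ → Bool) (s t : Fin (2 * n - 1)) (i k : ℕ)
    (hs : (s : ℕ) = 2 * i) (ht : (t : ℕ) = 2 * i + 2) (a : Fin n)
    (z : Fin (2 * n - 1) × (Fin n ⊕ Fin n × Fin L)) :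
    ((((layerAdj n L K) ^ (k + 2)) (s, Sum.inl a) z : ℕ) : ZMod 2) =
      (((layerAdj n L K) ^ k) (t, Sum.inl a) z : ℕ) +
      if (a : ℕ) = i then
        ∑ b : Fin n, (monB n L K a b : ZMod 2) * (((layerAdj n L K) ^ k) (t, Sum.inl b) z : ℕ)
      else 0 := by
  have hu : 2 * i + 1 < 2 * n - 1 := by omega
  rw [show k + 2 = (k + 1) + 1 from rfl, pow_succ', Matrix.mul_apply,
    stepN n L K s ⟨2 * i + 1, hu⟩ i hs rfl a (fun r => ((layerAdj n L K) ^ (k + 1)) r z)]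
  simp only [pow_succ' _ k, Matrix.mul_apply]
  rw [stepJ1 n L K ⟨2 * i + 1, hu⟩ t i rfl ht a (fun r => ((layerAdj n L K) ^ k) r z)]
  simp only [stepJ2 n L K ⟨2 * i + 1, hu⟩ t i rfl ht _ _ (fun r => ((layerAdj n L K) ^ k) r z)]
  push_cast
  congr 1
  split_ifs with ha
  · simp only [Finset.mul_sum]
    have : ∀ j : Fin n, (∑ l : Fin L, ∑ b : Fin n, ((if (a : ℕ) = i ∧ (a : ℕ) ≤ (j : ℕ) ∧ (j : ℕ) ≤ n - 2 ∧
                K (a : ℕ) (j : ℕ) (l : ℕ) then 1 else 0) * 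
          (if (b : ℕ) = (j : ℕ) + 1 then ((((layerAdj n L K) ^ k) (t, Sum.inl b) z : ℕ) : ZMod 2) else 0) : ZMod 2)) = ∑ b : Fin n, ∑ l : Fin L, ((if (a : ℕ) = i ∧ (a : ℕ) ≤ (j : ℕ) ∧ (j : ℕ) ≤ n - 2 ∧
                K (a : ℕ) (j : ℕ) (l : ℕ) then 1 else 0) * 
          (if (b : ℕ) = (j : ℕ) + 1 then ((((layerAdj n L K) ^ k) (t, Sum.inl b) z : ℕ) : ZMod 2) else 0)) := fun j => Finset.sum_comm
    simp only [this]
    rw [Finset.sum_comm]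
    refine Finset.sum_congr rfl fun b _ => ?_
    simp only [monB, Matrix.of_apply]
    split_ifs with hab
    · have hab' : (a : ℕ) < b := hab
      rw [Finset.sum_eq_single (⟨(b : ℕ) - 1, by omega⟩ : Fin n)]
      · rw [ZMod.natCast_mod, Finset.sum_range, ← Finset.sum_mul]
        have e1 : (b : ℕ) = (b : ℕ) - 1 + 1 := by omega
        have e2 : (a : ℕ) ≤ (b : ℕ) - 1 := by omega
        have e3 : (b : ℕ) - 1 ≤ n - 2 := by omega
        rw [if_pos e1]
        simp [ha ▸ e2, ha, e3]
      · intro j _ hj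
        apply Finset.sum_eq_zero
        intro l _
        rw [if_neg (c := (b : ℕ) = _), mul_zero]
        intro h
        exact hj (Fin.ext (by simp [h]))
      · simp
    · have hab' : ¬ (a : ℕ) < b := hab
      simp only [Nat.cast_zero, zero_mul]
      apply Finset.sum_eq_zero
      intro j _
      apply Finset.sum_eq_zero
      intro l _
      by_cases h : (b : ℕ) = j + 1
      · rw [if_neg (c := _ ∧ _), zero_mul]
        rintro ⟨_, h2, _⟩
        omega
      · rw [if_neg h, mul_zero]
  · simp [ha]

lemma main_ind (n L : ℕ) (K : ℕ → ℕ → ℕ → Bool) (zt : Fin (2 * n - 1)) (z : Fin n)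
    (hzt : (zt : ℕ) = 2 * n - 2) (hz : (z : ℕ) = n - 1) (m : ℕ) (s : Fin (2 * n - 1))
    (hs : (s : ℕ) + 2 * m = 2 * n - 2) (a : Fin n) :
    ((((layerAdj n L K) ^ (2 * m)) (s, Sum.inl a) (zt, Sum.inl z) : ℕ) : ZMod 2) =
      if (s : ℕ) ≤ 2 * (a : ℕ) then (gPaths n L K z a : ZMod 2) else 0 := by
  induction m generalizing s a with
  | zero =>
    have hst : s = zt := Fin.ext (by omega)
    subst hst
    by_cases haz : a = z
    · subst haz
      rw [if_pos (by omega)]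
      have : gPaths n L K a a = 1 := by
        obtain ⟨n', rfl⟩ : ∃ n', n = n' + 1 := ⟨n - 1, by omega⟩
        rw [gPaths, Finset.sum_range_succ', Finset.sum_eq_zero]
        · simp
        · intro k _
          exact monB_pow_zero _ _ _ _ _ _ (by omega)
      simp [this]
    · have : (a : ℕ) ≠ z := fun h => haz (Fin.ext h)
      rw [if_neg (by omega)]
      simp [Matrix.one_apply, haz]
  | succ m ih =>
    have hlt : (s : ℕ) + 2 < 2 * n - 1 := by omega
    rw [show 2 * (m + 1) = 2 * m + 2 by ring,
      step2 n L K s ⟨s + 2, hlt⟩ ((s : ℕ) / 2) (2 * m) (by omega) (by simp; omega)]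
    simp only [ih ⟨s + 2, hlt⟩ (by simp; omega)]
    by_cases h1 : (a : ℕ) = (s : ℕ) / 2
    · rw [if_pos h1, if_neg (by omega), if_pos (by omega), zero_add,
        gPaths_rec n L K z a (by rintro rfl; omega)]
      push_cast
      refine Finset.sum_congr rfl fun b _ => ?_
      by_cases hab : a < b
      · have : (a : ℕ) < b := hab
        rw [if_pos (by omega)]
      · have : monB n L K a b = 0 := by
          simp only [monB, Matrix.of_apply, if_neg hab]
        simp [this]
    · rw [if_neg h1, add_zero]
      by_cases h2 : (s : ℕ) ≤ 2 * a
      · rw [if_pos h2, if_pos (by omega)]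
      · rw [if_neg h2, if_neg (by omega)]

theorem stmt8 (n L : ℕ) (hn : 2 ≤ n) (hL : 1 ≤ L) (K : ℕ → ℕ → ℕ → Bool) :
    (∑ k ∈ Finset.Icc 1 (2 * n - 2),
        ((layerAdj n L K) ^ k)
          ((⟨0, by omega⟩ : Fin (2 * n - 1)), Sum.inl (⟨0, by omega⟩ : Fin n))
          ((⟨2 * n - 2, by omega⟩ : Fin (2 * n - 1)),
            Sum.inl (⟨n - 1, by omega⟩ : Fin n))) ≡
      (∑ k ∈ Finset.Icc 1 (n - 1),
        ((monB n L K) ^ k) (⟨0, by omega⟩ : Fin n) (⟨n - 1, by omega⟩ : Fin n))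
      [MOD 2] := by
  rw [← ZMod.natCast_eq_natCast_iff]
  rw [Finset.sum_eq_single (2 * n - 2)]
  · have hm := main_ind n L K ⟨2 * n - 2, by omega⟩ ⟨n - 1, by omega⟩ rfl rfl (n - 1)
      ⟨0, by omega⟩ (by simp; omega) ⟨0, by omega⟩
    have he : 2 * (n - 1) = 2 * n - 2 := by omega
    generalize 2 * (n - 1) = e at hm he
    subst he
    rw [hm]
    rw [if_pos (by simp)]
    congr 1
    obtain ⟨n', rfl⟩ : ∃ n', n = n' + 1 := ⟨n - 1, by omega⟩
    rw [gPaths, Finset.sum_range_succ', pow_zero, Matrix.one_apply_ne (by simp; omega), add_zero,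
      Finset.range_eq_Ico, Finset.sum_Ico_add' (fun k => ((monB (n' + 1) L K) ^ k) _ _) 0 n' 1]
    rfl
  · intro k _ hk
    exact layerAdj_pow_zero _ _ _ _ _ _ (by simp; omega)
  · intro h
    exact absurd (Finset.mem_Icc.2 ⟨by omega, le_rfl⟩) h
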